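/- For every p > 0 there is a constant C'_p > 0 such that for every N ≥ 2, if U is an N × N random unitary matrix distributed according to Haar measure on U(N), then E[ ((N/log N) · d_K(μ_N, ν))^{2p} ] ≤ C'_p; that is, the sequence (N/log N) · d_K(μ_N, ν) is bounded in L_{2p}. -/

import Mathlib

open MeasureTheory Real Filter

noncomputable section

/-- The Borel σ-algebra on the unitary group `U(N)`. -/
instance (N : ℕ) : MeasurableSpace (Matrix.unitaryGroup (Fin N) ℂ) := borel _

instance (N : ℕ) : BorelSpace (Matrix.unitaryGroup (Fin N) ℂ) := ⟨rfl⟩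

/-- The eigenvalue angles (in `[0, 2π)`, with multiplicity) of a unitary matrix `U`:
the arguments of the roots of the characteristic polynomial, shifted to lie in `[0, 2π)`. -/
def eigenAngles (N : ℕ) (U : Matrix.unitaryGroup (Fin N) ℂ) : Multiset ℝ :=
  ((U : Matrix (Fin N) (Fin N) ℂ).charpoly.roots).map
    (fun z => if 0 ≤ Complex.arg z then Complex.arg z else Complex.arg z + 2 * π)

open Classical in
/-- `𝒩_A`: the number of eigenvalue angles of `U` lying in the set `A`. -/
def countAngles (N : ℕ) (U : Matrix.unitaryGroup (Fin N) ℂ) (A : Set ℝ) : ℕ :=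
  Multiset.card ((eigenAngles N U).filter (· ∈ A))

/-- `𝒩_θ`: the number of eigenvalue angles of `U` in `[0, θ]`. -/
def countFun (N : ℕ) (U : Matrix.unitaryGroup (Fin N) ℂ) (θ : ℝ) : ℕ :=
  countAngles N U (Set.Icc 0 θ)

/-- The Kolmogorov distance between the empirical spectral measure of `U` and the
uniform measure on the circle: `sup_{0 ≤ θ < 2π} |𝒩_θ/N - θ/(2π)|`. -/
def dK (N : ℕ) (U : Matrix.unitaryGroup (Fin N) ℂ) : ℝ :=
  ⨆ θ : Set.Ico (0:ℝ) (2 * π), |(countFun N U θ : ℝ) / N - (θ : ℝ) / (2 * π)|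

/-- `max_{1 ≤ k ≤ N} |𝒩_{2πk/N} - k|`. -/
def maxDev (N : ℕ) (U : Matrix.unitaryGroup (Fin N) ℂ) : ℝ :=
  ⨆ k : (Finset.Icc 1 N : Finset ℕ), |(countFun N U (2 * π * (k : ℕ) / N) : ℝ) - ((k : ℕ) : ℝ)|

end

section KolmHelpers

open Matrix Polynomial

/-- Sum of the principal logarithms of `1 - λ` over eigenvalues `λ`. -/
noncomputable def logSum {n : Type*} [Fintype n] [DecidableEq n] (M : Matrix n n ℂ) : ℂ :=
  (M.charpoly.roots.map fun z => Complex.log (1 - z)).sum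

theorem charpoly_eq_prod_roots {n : Type*} [Fintype n] [DecidableEq n] (M : Matrix n n ℂ) :
    M.charpoly = (M.charpoly.roots.map fun a => X - C a).prod :=
  (IsAlgClosed.splits M.charpoly).eq_prod_roots_of_monic M.charpoly_monic

theorem card_roots_charpoly {n : Type*} [Fintype n] [DecidableEq n] (M : Matrix n n ℂ) :
    Multiset.card M.charpoly.roots = Fintype.card n := by
  rw [← (IsAlgClosed.splits M.charpoly).natDegree_eq_card_roots, M.charpoly_natDegree_eq_dim]

theorem det_sub_smul_eq {n : Type*} [Fintype n] [DecidableEq n] (M : Matrix n n ℂ) (z c : ℂ) :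
    (Matrix.scalar n z - c • M).det = (M.charpoly.roots.map fun a => z - c * a).prod := by
  by_cases hc : c = 0
  · subst hc
    simp [card_roots_charpoly]
  · have h1 : Matrix.scalar n z - c • M = c • (Matrix.scalar n (z / c) - M) := by
      ext i j
      by_cases h : i = j <;> simp [Matrix.scalar_apply, h, mul_sub, mul_div_cancel₀ _ hc]
    have h2 := congrArg (eval (z / c)) (charpoly_eq_prod_roots M)
    rw [Matrix.eval_charpoly, eval_multiset_prod, Multiset.map_map] at h2
    rw [h1, Matrix.det_smul, h2, ← card_roots_charpoly M, ← Multiset.card_map (fun a : ℂ => (a : ℂ)),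
      Multiset.map_id', ← Multiset.prod_replicate, ← Multiset.map_const', ← Multiset.prod_map_mul]
    congr 1
    apply Multiset.map_congr rfl
    intro x _
    simp [mul_sub, mul_div_cancel₀ _ hc]

theorem det_one_sub_smul_eq {n : Type*} [Fintype n] [DecidableEq n] (M : Matrix n n ℂ) (c : ℂ) :
    (1 - c • M).det = (M.charpoly.roots.map fun a => 1 - c * a).prod := by
  simpa using det_sub_smul_eq M 1 c

theorem roots_charpoly_smul {n : Type*} [Fintype n] [DecidableEq n] (M : Matrix n n ℂ) (c : ℂ) :
    (c • M).charpoly.roots = M.charpoly.roots.map (c * ·) := by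
  have : (c • M).charpoly = ((M.charpoly.roots.map (c * ·)).map fun a => X - C a).prod := by
    apply Polynomial.funext
    intro z
    rw [Matrix.eval_charpoly, det_sub_smul_eq, eval_multiset_prod, Multiset.map_map,
      Multiset.map_map]
    simp
  rw [this, roots_multiset_prod_X_sub_C]

theorem continuous_logSum {n A : Type*} [Fintype n] [DecidableEq n] [TopologicalSpace A]
    (M : A → Matrix n n ℂ) (hM : Continuous M)
    (h : ∀ a, ∀ z ∈ (M a).charpoly.roots, ‖z‖ ≤ 1 ∧ z ≠ 1) :
    Continuous fun a => logSum (M a) := by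
  have key : ∀ a, ∀ z ∈ (M a).charpoly.roots, ∀ t : unitInterval,
      1 - ((t : ℝ) : ℂ) * z ∈ Complex.slitPlane := by
    intro a z hz t
    obtain ⟨h1, h2⟩ := h a z hz
    rw [Complex.mem_slitPlane_iff]
    left
    have h3 : z.re < 1 := by
      rcases lt_or_eq_of_le ((Complex.re_le_norm z).trans h1) with h3 | h3
      · exact h3
      · exfalso
        apply h2
        have h4 := Complex.sq_norm z
        rw [Complex.normSq_apply, h3] at h4
        have h5 : z.im = 0 := by
          have : ‖z‖ ^ 2 ≤ 1 := by nlinarith [norm_nonneg z]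
          nlinarith [sq_nonneg z.im]
        exact Complex.ext h3 h5
    have := t.2.1
    have := t.2.2
    simp only [Complex.sub_re, Complex.one_re, Complex.re_ofReal_mul]
    by_cases h0 : (t : ℝ) = 0
    · simp [h0]
    · have : 0 < (t : ℝ) := lt_of_le_of_ne t.2.1 (Ne.symm h0)
      nlinarith
  let G : unitInterval × A → ℂ := fun q =>
    ((M q.2).charpoly.roots.map fun z => Complex.log (1 - ((q.1 : ℝ) : ℂ) * z)).sum
  have hexp : ∀ q, Complex.exp (G q) = (1 - ((q.1 : ℝ) : ℂ) • M q.2).det := by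
    intro q
    rw [det_one_sub_smul_eq, Complex.exp_multiset_sum, Multiset.map_map]
    congr 1
    apply Multiset.map_congr rfl
    intro z hz
    exact Complex.exp_log (Complex.slitPlane_ne_zero (key _ z hz _))
  let H : C(unitInterval × A, {z : ℂ // z ≠ 0}) :=
    ⟨fun q => ⟨(1 - ((q.1 : ℝ) : ℂ) • M q.2).det, by
      rw [← hexp]; exact Complex.exp_ne_zero _⟩, by
      refine Continuous.subtype_mk (Continuous.matrix_det ?_) _
      fun_prop⟩
  have hG := (Complex.isCoveringMap_exp.eq_liftHomotopy_iff (H := H)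
    (f := ⟨fun _ => 0, continuous_const⟩) (by intro a; apply Subtype.ext; simp [H]) G).2 ⟨by
      intro a
      have : ∀ s : Multiset ℂ, (∀ z ∈ s, ∀ t : unitInterval,
          1 - ((t : ℝ) : ℂ) * z ∈ Complex.slitPlane) →
          Continuous fun t : unitInterval =>
            (s.map fun z => Complex.log (1 - ((t : ℝ) : ℂ) * z)).sum := by
        intro s
        induction s using Multiset.induction_on with
        | empty => intro _; simpa using continuous_const
        | cons z s ih =>
          intro hs
          simp only [Multiset.map_cons, Multiset.sum_cons]
          refine Continuous.add ?_ (ih fun z hz => hs z (Multiset.mem_cons_of_mem hz))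
          refine Continuous.clog (by fun_prop) (hs z (Multiset.mem_cons_self _ _))
      exact this _ (key a), by
      funext q
      apply Subtype.ext
      exact hexp q, by
      intro a
      simp [G]⟩
  have hc : Continuous G := by
    rw [hG]; exact ContinuousMap.continuous _
  have := hc.comp (Continuous.prodMk_right (1 : unitInterval))
  simpa [G, Function.comp_def, logSum] using this

theorem eq_zero_of_exp_eq_one (D : unitInterval → ℂ) (hD : Continuous D)
    (h : ∀ t, Complex.exp (D t) = 1) (h0 : D 0 = 0) : D 1 = 0 := by
  have := Complex.isCoveringMap_exp.eq_of_comp_eq (g₁ := D) (g₂ := fun _ => 0) hD continuous_const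
    (by funext t; apply Subtype.ext; simp [h]) 0 h0
  rw [this]


open scoped Matrix.Norms.L2Operator in
theorem norm_root_le {n : Type*} [Fintype n] [DecidableEq n] (A B : Matrix n n ℂ)
    (hA : A ∈ Matrix.unitaryGroup n ℂ) (hB : B ∈ Matrix.unitaryGroup n ℂ) (r : ℝ) (h0 : 0 ≤ r)
    (h1 : r ≤ 1) (z : ℂ)
    (hz : z ∈ ((((1 + r) / 2 : ℝ) : ℂ) • A + (((1 - r) / 2 : ℝ) : ℂ) • B).charpoly.roots) :
    ‖z‖ ≤ 1 := by
  rcases isEmpty_or_nonempty n with hn | hn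
  · simp [Matrix.charpoly] at hz
  have hz' := Matrix.mem_spectrum_of_isRoot_charpoly (Polynomial.isRoot_of_mem_roots hz)
  have h2 := spectrum.norm_le_norm_of_mem hz'
  refine h2.trans ((norm_add_le _ _).trans ?_)
  rw [norm_smul, norm_smul]
  have hA' : ‖A‖ = 1 := CStarRing.norm_of_mem_unitary hA
  have hB' : ‖B‖ = 1 := CStarRing.norm_of_mem_unitary hB
  rw [hA', hB', Complex.norm_real, Complex.norm_real, Real.norm_of_nonneg (by linarith),
    Real.norm_of_nonneg (by linarith)]
  linarith

theorem norm_root_unitary_le {n : Type*} [Fintype n] [DecidableEq n] (A : Matrix n n ℂ)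
    (hA : A ∈ Matrix.unitaryGroup n ℂ) (z : ℂ) (hz : z ∈ A.charpoly.roots) : ‖z‖ ≤ 1 := by
  refine norm_root_le A A hA hA 1 zero_le_one le_rfl z ?_
  simpa using hz

theorem root_ne_one {n : Type*} [Fintype n] [DecidableEq n] (A : Matrix n n ℂ)
    (hA : (1 - A).det ≠ 0) (z : ℂ) (hz : z ∈ A.charpoly.roots) : z ≠ 1 := by
  rintro rfl
  apply hA
  have := Polynomial.isRoot_of_mem_roots hz
  rw [Polynomial.IsRoot, Matrix.eval_charpoly] at this
  simpa using this

theorem exp_logSum {n : Type*} [Fintype n] [DecidableEq n] (A : Matrix n n ℂ)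
    (hA : (1 - A).det ≠ 0) : Complex.exp (logSum A) = (1 - A).det := by
  have h := det_one_sub_smul_eq A 1
  simp only [one_smul, one_mul] at h
  rw [h, logSum, Complex.exp_multiset_sum, Multiset.map_map]
  congr 1
  apply Multiset.map_congr rfl
  intro z hz
  exact Complex.exp_log (sub_ne_zero.2 (root_ne_one A hA z hz).symm)

/-- Schur-complement reduction of a block matrix. -/
noncomputable def schurW {n : Type*} [Fintype n] (a : ℂ) (b : Matrix Unit n ℂ) (c : Matrix n Unit ℂ)
    (D : Matrix n n ℂ) : Matrix n n ℂ := D + (1 - a)⁻¹ • (c * b)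

theorem schurW_mem {n : Type*} [Fintype n] [DecidableEq n] (a : ℂ) (b : Matrix Unit n ℂ)
    (c : Matrix n Unit ℂ) (D : Matrix n n ℂ) (ha : a ≠ 1)
    (hU : fromBlocks (a • 1) b c D ∈ Matrix.unitaryGroup (Unit ⊕ n) ℂ) :
    schurW a b c D ∈ Matrix.unitaryGroup n ℂ := by
  have ha' : 1 - a ≠ 0 := sub_ne_zero.2 ha.symm
  set X : Matrix Unit n ℂ := (1 - a)⁻¹ • b with hX
  have h1 : fromBlocks (a • 1) b c D * fromRows X (1 : Matrix n n ℂ) = fromRows X (schurW a b c D) := by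
    rw [fromBlocks_mul_fromRows]
    congr 1
    · rw [Matrix.smul_mul, Matrix.one_mul, Matrix.mul_one, hX, smul_smul]
      ext i j
      simp
      field_simp
      ring
    · rw [schurW, Matrix.mul_one, hX, Matrix.mul_smul, add_comm]
  have h2 : (fromRows X (schurW a b c D))ᴴ * fromRows X (schurW a b c D)
      = (fromRows X (1 : Matrix n n ℂ))ᴴ * fromRows X (1 : Matrix n n ℂ) := by
    rw [← h1, Matrix.conjTranspose_mul, Matrix.mul_assoc, ← Matrix.mul_assoc _ _ (fromRows X (1 : Matrix n n ℂ))]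
    have := (Matrix.mem_unitaryGroup_iff').1 hU
    rw [Matrix.star_eq_conjTranspose] at this
    rw [this, Matrix.one_mul]
  rw [conjTranspose_fromRows_eq_fromCols_conjTranspose,
    conjTranspose_fromRows_eq_fromCols_conjTranspose, fromCols_mul_fromRows,
    fromCols_mul_fromRows] at h2
  rw [Matrix.mem_unitaryGroup_iff', Matrix.star_eq_conjTranspose]
  simpa using h2

theorem det_schur {n : Type*} [Fintype n] [DecidableEq n] (a : ℂ) (b : Matrix Unit n ℂ)
    (c : Matrix n Unit ℂ) (D : Matrix n n ℂ) (ha : a ≠ 1) (r : ℂ) :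
    (1 - fromBlocks (a • 1) (r • b) c (r • D)).det = (1 - a) * (1 - r • schurW a b c D).det := by
  have ha' : 1 - a ≠ 0 := sub_ne_zero.2 ha.symm
  have h1 : 1 - fromBlocks (a • (1 : Matrix Unit Unit ℂ)) (r • b) c (r • D)
      = fromBlocks ((1 - a) • 1) (- (r • b)) (-c) (1 - r • D) := by
    rw [← fromBlocks_one, sub_eq_add_neg, fromBlocks_neg, fromBlocks_add]
    simp [sub_eq_add_neg, add_smul]
  let _ : Invertible ((1 - a) • (1 : Matrix Unit Unit ℂ)) :=
    ⟨(1 - a)⁻¹ • 1, by simp [smul_smul, ha'], by simp [smul_smul, ha']⟩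
  have h2 : ⅟((1 - a) • (1 : Matrix Unit Unit ℂ)) = (1 - a)⁻¹ • 1 := rfl
  rw [h1, det_fromBlocks₁₁, h2]
  congr 1
  · simp
  · congr 1
    simp only [schurW, Matrix.mul_smul, Matrix.mul_one, Matrix.smul_mul, Matrix.neg_mul,
      Matrix.mul_neg, smul_neg, neg_neg, smul_add, smul_smul]
    rw [mul_comm r]
    abel

theorem logSum_schur {n : Type*} [Fintype n] [DecidableEq n] (a : ℂ) (b : Matrix Unit n ℂ)
    (c : Matrix n Unit ℂ) (D : Matrix n n ℂ) (ha : a ≠ 1)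
    (hU : fromBlocks (a • 1) b c D ∈ Matrix.unitaryGroup (Unit ⊕ n) ℂ)
    (hW : (1 - schurW a b c D).det ≠ 0) :
    logSum (fromBlocks (a • 1) b c D) = Complex.log (1 - a) + logSum (schurW a b c D) := by
  have ha' : 1 - a ≠ 0 := sub_ne_zero.2 ha.symm
  set W := schurW a b c D with hWdef
  have hWu : W ∈ Matrix.unitaryGroup n ℂ := schurW_mem a b c D ha hU
  -- the roots of `r • W`
  have hroots : ∀ r : unitInterval, ∀ z ∈ (((r : ℝ) : ℂ) • W).charpoly.roots, ‖z‖ ≤ 1 ∧ z ≠ 1 := by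
    intro r z hz
    rw [roots_charpoly_smul, Multiset.mem_map] at hz
    obtain ⟨w, hw, rfl⟩ := hz
    have h1 := norm_root_unitary_le W hWu w hw
    have h2 := root_ne_one W hW w hw
    have h3 : ‖((r : ℝ) : ℂ) * w‖ = r * ‖w‖ := by
      rw [norm_mul, Complex.norm_real, Real.norm_of_nonneg r.2.1]
    refine ⟨?_, ?_⟩
    · rw [h3]; nlinarith [r.2.1, r.2.2, norm_nonneg w]
    · intro h4
      rw [h4, norm_one] at h3
      have h5 : (r : ℝ) = 1 := by nlinarith [r.2.1, r.2.2, norm_nonneg w]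
      rw [h5] at h4
      exact h2 (by simpa using h4)
  have hdetW : ∀ r : unitInterval, (1 - ((r : ℝ) : ℂ) • W).det ≠ 0 := by
    intro r h
    have h1 : Polynomial.IsRoot (((r : ℝ) : ℂ) • W).charpoly 1 := by
      rw [Polynomial.IsRoot, Matrix.eval_charpoly]
      simpa using h
    exact (hroots r 1 ((Polynomial.mem_roots (Matrix.charpoly_monic _).ne_zero).2 h1)).2 rfl
  let M : unitInterval → Matrix (Unit ⊕ n) (Unit ⊕ n) ℂ := fun r =>
    fromBlocks (a • 1) (((r : ℝ) : ℂ) • b) c (((r : ℝ) : ℂ) • D)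
  have hMdet : ∀ r, (1 - M r).det = (1 - a) * (1 - ((r : ℝ) : ℂ) • W).det := fun r =>
    det_schur a b c D ha _
  have hMdet0 : ∀ r, (1 - M r).det ≠ 0 := fun r => by
    rw [hMdet]; exact mul_ne_zero ha' (hdetW r)
  have hJ : fromBlocks (1 : Matrix Unit Unit ℂ) 0 0 (-1 : Matrix n n ℂ)
      ∈ Matrix.unitaryGroup (Unit ⊕ n) ℂ := by
    rw [Matrix.mem_unitaryGroup_iff, Matrix.star_eq_conjTranspose, fromBlocks_conjTranspose,
      fromBlocks_multiply]
    simp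
  have hMr : ∀ r : unitInterval, ∀ z ∈ (M r).charpoly.roots, ‖z‖ ≤ 1 ∧ z ≠ 1 := by
    intro r z hz
    refine ⟨?_, root_ne_one _ (hMdet0 r) z hz⟩
    refine norm_root_le _ _ hU (mul_mem hU hJ) r r.2.1 r.2.2 z ?_
    convert hz using 3
    rw [fromBlocks_multiply, fromBlocks_smul, fromBlocks_smul, fromBlocks_add]
    simp only [M, Matrix.mul_zero, Matrix.mul_one, Matrix.mul_neg, add_zero, zero_add, smul_neg]
    congr 1
    · rw [← add_smul]; push_cast; ring_nf; simp
    · rw [← sub_eq_add_neg, ← sub_smul]; push_cast; ring_nf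
    · rw [← add_smul]; push_cast; ring_nf; simp
    · rw [← sub_eq_add_neg, ← sub_smul]; push_cast; ring_nf
  let E : unitInterval → ℂ := fun r =>
    logSum (M r) - (Complex.log (1 - a) + logSum (((r : ℝ) : ℂ) • W))
  have hE := eq_zero_of_exp_eq_one E
    (by
      refine (continuous_logSum M ?_ hMr).sub
        (continuous_const.add (continuous_logSum (fun r : unitInterval => ((r : ℝ) : ℂ) • W) ?_ hroots))
      · exact Continuous.matrix_fromBlocks (by fun_prop) (by fun_prop) (by fun_prop) (by fun_prop)
      · fun_prop)
    (by
      intro r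
      rw [Complex.exp_sub, Complex.exp_add, Complex.exp_log ha', exp_logSum _ (hMdet0 r),
        exp_logSum _ (hdetW r), hMdet]
      exact div_self (mul_ne_zero ha' (hdetW r)))
    (by
      have h1 : M 0 = fromBlocks (a • 1) 0 c 0 := by simp [M]
      have h2 : (M 0).charpoly.roots = a ::ₘ (0 : Matrix n n ℂ).charpoly.roots := by
        rw [h1, Matrix.charpoly_fromBlocks_zero₁₂, Polynomial.roots_mul
          (mul_ne_zero (Matrix.charpoly_monic _).ne_zero (Matrix.charpoly_monic _).ne_zero)]
        have : (a • (1 : Matrix Unit Unit ℂ)).charpoly = X - C a := by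
          simp [Matrix.charpoly, Matrix.charmatrix]
        rw [this, Polynomial.roots_X_sub_C]
        rfl
      simp only [E, logSum, h2]
      simp)
  have h5 : M 1 = fromBlocks (a • 1) b c D := by simp [M]
  simp only [E, h5] at hE
  simpa [sub_eq_zero] using hE


/-- The unitary group as a type. -/
abbrev UG (N : ℕ) := ↥(Matrix.unitaryGroup (Fin N) ℂ)

instance ugSecondCountable (N : ℕ) : SecondCountableTopology (UG N) :=
  inferInstanceAs (SecondCountableTopology
    {x : Fin N → Fin N → ℂ // x ∈ (Matrix.unitaryGroup (Fin N) ℂ : Set (Matrix (Fin N) (Fin N) ℂ))})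

instance ugCompact (N : ℕ) : CompactSpace (UG N) := by
  apply isCompact_iff_compactSpace.1
  have hK : IsCompact (Set.pi Set.univ fun _ : Fin N => Set.pi Set.univ fun _ : Fin N =>
      Metric.closedBall (0 : ℂ) 1) :=
    isCompact_univ_pi fun _ => isCompact_univ_pi fun _ => isCompact_closedBall _ _
  refine IsCompact.of_isClosed_subset hK ?_ ?_
  · exact isClosed_unitary (R := Matrix (Fin N) (Fin N) ℂ)
  · intro U hU i _ j _
    rw [mem_closedBall_zero_iff]
    exact entry_norm_bound_of_unitary hU i j

theorem exists_haar_prob (N : ℕ) : ∃ μ : Measure (UG N), IsProbabilityMeasure μ ∧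
    μ.IsMulLeftInvariant := by
  refine ⟨Measure.haarMeasure ⊤, ⟨?_⟩, inferInstance⟩
  have := Measure.haarMeasure_self (K₀ := (⊤ : TopologicalSpace.PositiveCompacts (UG N)))
  simpa using this

theorem continuous_entry {N : ℕ} (i j : Fin N) :
    Continuous fun U : UG N => (U : Matrix (Fin N) (Fin N) ℂ) i j :=
  (continuous_apply_apply i j).comp continuous_subtype_val

theorem integrable_of_cont {N : ℕ} (μ : Measure (UG N)) [IsProbabilityMeasure μ] {f : UG N → ℝ}
    (hf : Continuous f) : Integrable f μ :=
  hf.integrable_of_hasCompactSupport (HasCompactSupport.of_compactSpace f)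

/-- Scalar unitary matrices. -/
noncomputable def rot (N : ℕ) (φ : ℝ) : UG N :=
  ⟨Complex.exp (φ * Complex.I) • 1, by
    rw [Matrix.mem_unitaryGroup_iff, Matrix.star_eq_conjTranspose, Matrix.conjTranspose_smul,
      Matrix.conjTranspose_one, Matrix.smul_mul, Matrix.one_mul, smul_smul]
    have : Complex.exp (φ * Complex.I) * star (Complex.exp (φ * Complex.I)) = 1 := by
      rw [Complex.star_def, Complex.mul_conj, Complex.normSq_eq_norm_sq,
        Complex.norm_exp_ofReal_mul_I]
      simp
    rw [this, one_smul]⟩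

theorem rot_mul_coe {N : ℕ} (φ : ℝ) (U : UG N) :
    ((rot N φ * U : UG N) : Matrix (Fin N) (Fin N) ℂ)
      = Complex.exp (φ * Complex.I) • (U : Matrix (Fin N) (Fin N) ℂ) := by
  change (Complex.exp (φ * Complex.I) • (1 : Matrix (Fin N) (Fin N) ℂ)) * _ = _
  rw [Matrix.smul_mul, Matrix.one_mul]

theorem continuous_rot (N : ℕ) : Continuous (rot N) := by
  refine Continuous.subtype_mk ?_ _
  fun_prop

/-- `det (1 - U)`. -/
noncomputable def dOne {N : ℕ} (U : UG N) : ℂ := (1 - (U : Matrix (Fin N) (Fin N) ℂ)).det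

theorem continuous_dOne (N : ℕ) : Continuous (dOne (N := N)) :=
  Continuous.matrix_det (continuous_const.sub continuous_subtype_val)

theorem ae_dOne_ne_zero {N : ℕ} (μ : Measure (UG N)) [IsProbabilityMeasure μ]
    [μ.IsMulLeftInvariant] : ∀ᵐ U ∂μ, dOne U ≠ 0 := by
  classical
  let s : Set (UG N) := {U | dOne U = 0}
  have hs : MeasurableSet s := (isClosed_singleton.preimage (continuous_dOne N)).measurableSet
  let g : UG N → ENNReal := s.indicator 1
  have hg : Measurable g := measurable_one.indicator hs
  let ν : Measure ℝ := volume.restrict (Set.Icc 0 1)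
  have hν : IsProbabilityMeasure ν := ⟨by simp [ν]⟩
  have h1 : ∫⁻ U, g U ∂μ = ∫⁻ φ, ∫⁻ U, g (rot N φ * U) ∂μ ∂ν := by
    simp_rw [lintegral_mul_left_eq_self]
    simp
  rw [lintegral_lintegral_swap] at h1
  · have h2 : ∀ U : UG N, ∫⁻ φ, g (rot N φ * U) ∂ν = 0 := by
      intro U
      have hfin : Set.Finite (Set.Icc (0:ℝ) 1 ∩ {φ | rot N φ * U ∈ s}) := by
        let R : Set ℂ := {w | ∃ z ∈ (U : Matrix (Fin N) (Fin N) ℂ).charpoly.roots, w = z⁻¹}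
        have hR : R.Finite := by
          have : R = (fun z : ℂ => z⁻¹) ''
              {z | z ∈ (U : Matrix (Fin N) (Fin N) ℂ).charpoly.roots} := by
            ext w; simp only [R, Set.mem_ofPred_eq, Set.mem_image]
            constructor
            · rintro ⟨z, h, rfl⟩; exact ⟨z, h, rfl⟩
            · rintro ⟨z, h, rfl⟩; exact ⟨z, h, rfl⟩
          rw [this]
          exact (Multiset.finite_toSet _).image _
        refine Set.Finite.of_finite_image (f := fun φ : ℝ => Complex.exp (φ * Complex.I))
          (hR.subset ?_) ?_
        · rintro _ ⟨φ, ⟨_, hφ⟩, rfl⟩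
          simp only [s, Set.mem_ofPred_eq, dOne] at hφ
          rw [rot_mul_coe, det_one_sub_smul_eq, Multiset.prod_eq_zero_iff, Multiset.mem_map] at hφ
          obtain ⟨z, hz, h⟩ := hφ
          exact ⟨z, hz, eq_inv_of_mul_eq_one_left (sub_eq_zero.1 h).symm⟩
        · intro x hx y hy hxy
          have hpi := Real.pi_gt_three
          have := Complex.exp_inj_of_neg_pi_lt_of_le_pi (x := x * Complex.I) (y := y * Complex.I)
            (by simp; linarith [hx.1.1]) (by simp; linarith [hx.1.2])
            (by simp; linarith [hy.1.1]) (by simp; linarith [hy.1.2]) hxy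
          simpa using this
      have h3 : ∀ φ, g (rot N φ * U) = ({φ | rot N φ * U ∈ s} : Set ℝ).indicator 1 φ := by
        intro φ; simp [g, Set.indicator]
      have hms : MeasurableSet ({φ | rot N φ * U ∈ s} : Set ℝ) :=
        hs.preimage ((continuous_rot N).mul continuous_const).measurable
      simp_rw [h3]
      rw [lintegral_indicator_one hms, Measure.restrict_apply hms, Set.inter_comm]
      exact hfin.measure_zero _
    simp_rw [h2] at h1
    simp only [lintegral_zero] at h1
    rw [lintegral_indicator_one hs] at h1
    rw [ae_iff]
    simpa [s] using h1
  · apply Measurable.aemeasurable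
    apply hg.comp
    exact (((continuous_rot N).comp continuous_fst).mul continuous_snd).measurable

theorem integral_im_entry {N : ℕ} (μ : Measure (UG N)) [IsProbabilityMeasure μ]
    [μ.IsMulLeftInvariant] (i j : Fin N) :
    ∫ U : UG N, ((U : Matrix (Fin N) (Fin N) ℂ) i j).im ∂μ = 0 := by
  have h := integral_mul_left_eq_self (μ := μ)
    (fun U : UG N => ((U : Matrix (Fin N) (Fin N) ℂ) i j).im) (rot N π)
  have h2 : ∀ U : UG N, (((rot N π * U : UG N) : Matrix (Fin N) (Fin N) ℂ) i j).im
      = - ((U : Matrix (Fin N) (Fin N) ℂ) i j).im := by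
    intro U
    rw [rot_mul_coe, Complex.exp_pi_mul_I]
    simp
  simp_rw [h2] at h
  rw [integral_neg] at h
  linarith

theorem sum_col_sq {N : ℕ} (U : UG N) (j : Fin N) :
    ∑ i, ‖(U : Matrix (Fin N) (Fin N) ℂ) i j‖ ^ 2 = 1 := by
  have h := congrFun (congrFun ((Matrix.mem_unitaryGroup_iff').1 U.2) j) j
  rw [Matrix.mul_apply, Matrix.one_apply_eq] at h
  have h2 : ∀ i, (star (U : Matrix (Fin N) (Fin N) ℂ)) j i * (U : Matrix (Fin N) (Fin N) ℂ) i j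
      = ((‖(U : Matrix (Fin N) (Fin N) ℂ) i j‖ ^ 2 : ℝ) : ℂ) := by
    intro i
    rw [Matrix.star_apply, Complex.star_def, mul_comm, Complex.mul_conj, Complex.normSq_eq_norm_sq]
  simp_rw [h2] at h
  exact_mod_cast h

theorem integral_sq_entry {N : ℕ} (μ : Measure (UG N)) [IsProbabilityMeasure μ]
    [μ.IsMulLeftInvariant] (i j : Fin N) :
    ∫ U : UG N, ‖(U : Matrix (Fin N) (Fin N) ℂ) i j‖ ^ 2 ∂μ = 1 / N := by
  have hperm : ∀ k, ∫ U : UG N, ‖(U : Matrix (Fin N) (Fin N) ℂ) k j‖ ^ 2 ∂μ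
      = ∫ U : UG N, ‖(U : Matrix (Fin N) (Fin N) ℂ) i j‖ ^ 2 ∂μ := by
    intro k
    let σ : Equiv.Perm (Fin N) := Equiv.swap i k
    let P : UG N := ⟨σ.toPEquiv.toMatrix, by
      rw [Matrix.mem_unitaryGroup_iff, PEquiv.toMatrix_toPEquiv_mul]
      ext a b
      simp [Matrix.submatrix_apply, Matrix.star_apply, PEquiv.toMatrix_apply, Matrix.one_apply,
        Equiv.toPEquiv_apply, eq_comm, apply_ite]⟩
    have h := integral_mul_left_eq_self (μ := μ)
      (fun U : UG N => ‖(U : Matrix (Fin N) (Fin N) ℂ) i j‖ ^ 2) P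
    rw [← h]
    congr 1
    funext U
    have : ((P * U : UG N) : Matrix (Fin N) (Fin N) ℂ)
        = (σ.toPEquiv.toMatrix : Matrix (Fin N) (Fin N) ℂ) * (U : Matrix (Fin N) (Fin N) ℂ) := rfl
    rw [this, PEquiv.toMatrix_toPEquiv_mul]
    simp [σ]
  have hsum : ∑ k, ∫ U : UG N, ‖(U : Matrix (Fin N) (Fin N) ℂ) k j‖ ^ 2 ∂μ = 1 := by
    rw [← integral_finsetSum]
    · simp_rw [sum_col_sq]; simp
    · intro k _
      exact integrable_of_cont μ ((continuous_entry k j).norm.pow 2)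
  simp_rw [hperm] at hsum
  have hN : (N : ℝ) ≠ 0 := by
    have := i.pos
    positivity
  simp at hsum
  field_simp
  linarith

theorem exp_arg_le (ε : ℝ) (hε : ε = 1 ∨ ε = -1) (w : ℂ) (hw : ‖w‖ ≤ 1) :
    Real.exp (ε * (Complex.log (1 - w)).im) ≤ 1 - ε * w.im + 300 * ‖w‖ ^ 2 := by
  have hεa : |ε| = 1 := by rcases hε with h | h <;> simp [h]
  have him := Complex.abs_im_le_norm w
  have him' : |ε * w.im| ≤ ‖w‖ := by rw [abs_mul, hεa, one_mul]; exact him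
  rcases le_or_gt ‖w‖ (1 / 2) with h | h
  · have h1 := Complex.norm_log_one_add_sub_self_le (z := -w) (by rw [norm_neg]; linarith)
    rw [norm_neg, ← sub_eq_add_neg, sub_neg_eq_add] at h1
    have h2 : (1 - ‖w‖)⁻¹ ≤ 2 := by
      rw [inv_le_comm₀ (by linarith) (by norm_num)]; linarith
    have h3 : ‖Complex.log (1 - w) + w‖ ≤ ‖w‖ ^ 2 := by
      refine h1.trans ?_
      nlinarith [sq_nonneg ‖w‖]
    have h4 : |(Complex.log (1 - w)).im + w.im| ≤ ‖w‖ ^ 2 := by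
      have := Complex.abs_im_le_norm (Complex.log (1 - w) + w)
      rw [Complex.add_im] at this
      exact this.trans h3
    set x := ε * (Complex.log (1 - w)).im with hx
    have h5 : |x + ε * w.im| ≤ ‖w‖ ^ 2 := by
      rw [hx, ← mul_add, abs_mul, hεa, one_mul]; exact h4
    have h6 := abs_le.1 h5
    have h7 := abs_le.1 him'
    have hn := norm_nonneg w
    have h8 : |x| ≤ 3 / 2 * ‖w‖ := by
      rw [abs_le]; constructor <;> nlinarith
    have h9 := (abs_le.1 (Real.abs_exp_sub_one_sub_id_le (x := x) (by linarith))).2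
    have h10 : x ^ 2 ≤ (3 / 2 * ‖w‖) ^ 2 := by
      rw [← sq_abs x]; gcongr
    nlinarith
  · have h1 : ε * (Complex.log (1 - w)).im ≤ π := by
      rw [Complex.log_im]
      calc _ ≤ |ε * Complex.arg (1 - w)| := le_abs_self _
        _ = |Complex.arg (1 - w)| := by rw [abs_mul, hεa, one_mul]
        _ ≤ π := Complex.abs_arg_le_pi _
    have h2 : Real.exp (ε * (Complex.log (1 - w)).im) ≤ Real.exp 1 ^ 4 := by
      rw [← Real.exp_nat_mul]
      apply Real.exp_le_exp.2
      have := Real.pi_lt_d2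
      push_cast; linarith
    have h3 : Real.exp 1 ^ 4 ≤ 2.72 ^ 4 := by
      have := Real.exp_one_lt_d9
      gcongr; linarith
    have h4 := abs_le.1 him'
    have h5 : Real.exp 1 ^ 4 ≤ 60 := h3.trans (by norm_num)
    clear h3
    nlinarith

theorem integral_exp_arg_le {N : ℕ} (μ : Measure (UG N)) [IsProbabilityMeasure μ]
    [μ.IsMulLeftInvariant] (i : Fin N) (ε : ℝ) (hε : ε = 1 ∨ ε = -1) :
    ∫⁻ U : UG N, ENNReal.ofReal
      (Real.exp (ε * (Complex.log (1 - (U : Matrix (Fin N) (Fin N) ℂ) i i)).im)) ∂μ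
      ≤ ENNReal.ofReal (1 + 300 / N) := by
  have hb : ∀ U : UG N, ‖(U : Matrix (Fin N) (Fin N) ℂ) i i‖ ≤ 1 := fun U =>
    entry_norm_bound_of_unitary U.2 i i
  let f : UG N → ℝ := fun U => 1 - ε * ((U : Matrix (Fin N) (Fin N) ℂ) i i).im
    + 300 * ‖(U : Matrix (Fin N) (Fin N) ℂ) i i‖ ^ 2
  have hc := continuous_entry (N := N) i i
  have hci : Continuous fun U : UG N => ((U : Matrix (Fin N) (Fin N) ℂ) i i).im :=
    Complex.continuous_im.comp hc
  have hf : Continuous f := by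
    exact (continuous_const.sub (continuous_const.mul hci)).add
      (continuous_const.mul (hc.norm.pow 2))
  calc _ ≤ ∫⁻ U : UG N, ENNReal.ofReal (f U) ∂μ := by
        apply lintegral_mono
        intro U
        exact ENNReal.ofReal_le_ofReal (exp_arg_le ε hε _ (hb U))
    _ = ENNReal.ofReal (∫ U, f U ∂μ) := by
        rw [ofReal_integral_eq_lintegral_ofReal (integrable_of_cont μ hf)]
        exact Filter.Eventually.of_forall fun U =>
          (Real.exp_pos _).le.trans (exp_arg_le ε hε _ (hb U))
    _ = _ := by
        congr 1
        simp only [f]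
        rw [integral_add, integral_sub, integral_const_mul, integral_const_mul,
          integral_im_entry, integral_sq_entry]
        · simp; ring
        · exact integrable_of_cont μ continuous_const
        · exact integrable_of_cont μ (continuous_const.mul hci)
        · exact integrable_of_cont μ (continuous_const.sub (continuous_const.mul hci))
        · exact integrable_of_cont μ (continuous_const.mul (hc.norm.pow 2))


/-- An equivalence splitting off one index. -/
noncomputable def eN (N : ℕ) : Unit ⊕ Fin N ≃ Fin (N + 1) :=
  Fintype.equivOfCardEq (by simp; omega)

/-- The embedding of `U(N)` in `U(N+1)`. -/
noncomputable def iotaU {N : ℕ} (V : UG N) : UG (N + 1) :=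
  ⟨(fromBlocks 1 0 0 (V : Matrix (Fin N) (Fin N) ℂ)).submatrix (eN N).symm (eN N).symm, by
    rw [Matrix.mem_unitaryGroup_iff, Matrix.star_eq_conjTranspose, Matrix.conjTranspose_submatrix,
      Matrix.submatrix_mul_equiv, fromBlocks_conjTranspose, fromBlocks_multiply]
    have := (Matrix.mem_unitaryGroup_iff).1 V.2
    rw [Matrix.star_eq_conjTranspose] at this
    simp [this]⟩

theorem continuous_iotaU (N : ℕ) : Continuous (iotaU (N := N)) := by
  refine Continuous.subtype_mk ?_ _
  refine Continuous.matrix_submatrix ?_ _ _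
  exact Continuous.matrix_fromBlocks continuous_const continuous_const continuous_const
    continuous_subtype_val

theorem logSum_step {N : ℕ} (U : UG (N + 1))
    (ha : (U : Matrix (Fin (N + 1)) (Fin (N + 1)) ℂ) (eN N (Sum.inl ())) (eN N (Sum.inl ())) ≠ 1) :
    ∃ W : UG N, ∀ V : UG N,
      dOne (iotaU V * U) = (1 - (U : Matrix (Fin (N + 1)) (Fin (N + 1)) ℂ) (eN N (Sum.inl ()))
        (eN N (Sum.inl ()))) * dOne (W * V) ∧
      (dOne (W * V) ≠ 0 →
      logSum ((iotaU V * U : UG (N + 1)) : Matrix (Fin (N + 1)) (Fin (N + 1)) ℂ)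
        = Complex.log (1 - (U : Matrix (Fin (N + 1)) (Fin (N + 1)) ℂ) (eN N (Sum.inl ()))
          (eN N (Sum.inl ()))) + logSum ((W * V : UG N) : Matrix (Fin N) (Fin N) ℂ)) := by
  set a := (U : Matrix (Fin (N + 1)) (Fin (N + 1)) ℂ) (eN N (Sum.inl ())) (eN N (Sum.inl ()))
  let U' : Matrix (Unit ⊕ Fin N) (Unit ⊕ Fin N) ℂ :=
    (U : Matrix (Fin (N + 1)) (Fin (N + 1)) ℂ).submatrix (eN N) (eN N)
  let b := U'.toBlocks₁₂
  let c := U'.toBlocks₂₁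
  let D := U'.toBlocks₂₂
  have hU' : U' = fromBlocks (a • 1) b c D := by
    rw [← fromBlocks_toBlocks U']
    congr 1
    ext i j
    simp [U', a, toBlocks₁₁]
  have hmem : U' ∈ Matrix.unitaryGroup (Unit ⊕ Fin N) ℂ := by
    rw [Matrix.mem_unitaryGroup_iff, Matrix.star_eq_conjTranspose, Matrix.conjTranspose_submatrix,
      Matrix.submatrix_mul_equiv]
    have := (Matrix.mem_unitaryGroup_iff).1 U.2
    rw [Matrix.star_eq_conjTranspose] at this
    simp [this]
  have hW := schurW_mem a b c D ha (hU' ▸ hmem)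
  refine ⟨⟨schurW a b c D, hW⟩, fun V => ?_⟩
  set Vm := (V : Matrix (Fin N) (Fin N) ℂ)
  have hWV : schurW a (b * Vm) c (D * Vm) = schurW a b c D * Vm := by
    rw [schurW, schurW, Matrix.add_mul, Matrix.smul_mul, Matrix.mul_assoc]
  have hV1 : fromBlocks (1 : Matrix Unit Unit ℂ) 0 0 Vm
      ∈ Matrix.unitaryGroup (Unit ⊕ Fin N) ℂ := by
    rw [Matrix.mem_unitaryGroup_iff, Matrix.star_eq_conjTranspose, fromBlocks_conjTranspose,
      fromBlocks_multiply]
    have := (Matrix.mem_unitaryGroup_iff).1 V.2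
    rw [Matrix.star_eq_conjTranspose] at this
    simp [Vm, this]
  have hprod : U' * fromBlocks 1 0 0 Vm = fromBlocks (a • 1) (b * Vm) c (D * Vm) := by
    rw [hU', fromBlocks_multiply]
    simp
  have hmem2 : fromBlocks (a • 1) (b * Vm) c (D * Vm)
      ∈ Matrix.unitaryGroup (Unit ⊕ Fin N) ℂ := hprod ▸ mul_mem hmem hV1
  have hcoe : ((iotaU V * U : UG (N + 1)) : Matrix (Fin (N + 1)) (Fin (N + 1)) ℂ)
      = Matrix.reindex (eN N) (eN N) (fromBlocks 1 0 0 Vm * U') := by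
    have h1 : (U : Matrix (Fin (N + 1)) (Fin (N + 1)) ℂ) = U'.submatrix (eN N).symm (eN N).symm := by
      simp [U']
    change (fromBlocks 1 0 0 Vm).submatrix (eN N).symm (eN N).symm
      * (U : Matrix (Fin (N + 1)) (Fin (N + 1)) ℂ) = _
    rw [h1, Matrix.submatrix_mul_equiv]
    rfl
  have hchar : ((iotaU V * U : UG (N + 1)) : Matrix (Fin (N + 1)) (Fin (N + 1)) ℂ).charpoly
      = (fromBlocks (a • 1) (b * Vm) c (D * Vm)).charpoly := by
    rw [hcoe, Matrix.charpoly_reindex, Matrix.charpoly_mul_comm, hprod]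
  have hdet : ∀ {m : Type} [Fintype m] [DecidableEq m] (A : Matrix m m ℂ),
      (1 - A).det = A.charpoly.eval 1 := by
    intro m _ _ A
    rw [Matrix.eval_charpoly]; simp
  have hWVcoe : (((⟨schurW a b c D, hW⟩ : UG N) * V : UG N) : Matrix (Fin N) (Fin N) ℂ)
      = schurW a (b * Vm) c (D * Vm) := hWV.symm
  refine ⟨?_, ?_⟩
  · unfold dOne
    rw [hWVcoe, hdet, hchar, ← hdet]
    simpa using det_schur a (b * Vm) c (D * Vm) ha 1
  · intro hne
    unfold dOne at hne
    rw [hWVcoe] at hne ⊢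
    rw [← logSum_schur a (b * Vm) c (D * Vm) ha hmem2 hne, logSum, logSum, hchar]

open Classical in
/-- Truncated exponential functional. -/
noncomputable def Fexp {N : ℕ} (ε : ℝ) (U : UG N) : ENNReal :=
  ({U : UG N | dOne U ≠ 0}).piecewise
    (fun U => ENNReal.ofReal (Real.exp (ε * (logSum (U : Matrix (Fin N) (Fin N) ℂ)).im)))
    (fun _ => 0) U

theorem measurable_Fexp {N : ℕ} (ε : ℝ) : Measurable (Fexp (N := N) ε) := by
  classical
  unfold Fexp
  have ho : IsOpen {U : UG N | dOne U ≠ 0} :=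
    isOpen_ne_fun (continuous_dOne N) continuous_const
  have := ContinuousOn.measurable_piecewise (s := {U : UG N | dOne U ≠ 0})
    (f := fun U : UG N =>
      ENNReal.ofReal (Real.exp (ε * (logSum (U : Matrix (Fin N) (Fin N) ℂ)).im)))
    (g := fun _ => 0) ?_ continuousOn_const ho.measurableSet
  · convert! this
  · rw [continuousOn_iff_continuous_domRestrict]
    have h := continuous_logSum (A := {U : UG N | dOne U ≠ 0})
      (fun U => ((U : UG N) : Matrix (Fin N) (Fin N) ℂ))
      (continuous_subtype_val.comp continuous_subtype_val)
      (fun U z hz => ⟨norm_root_unitary_le _ (U : UG N).2 z hz, root_ne_one _ U.2 z hz⟩)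
    exact ENNReal.continuous_ofReal.comp (Real.continuous_exp.comp
      (continuous_const.mul (Complex.continuous_im.comp h)))

theorem lintegral_Fexp_le (ε : ℝ) (hε : ε = 1 ∨ ε = -1) (N : ℕ) :
    ∀ (μ : Measure (UG N)) [IsProbabilityMeasure μ] [μ.IsMulLeftInvariant],
    ∫⁻ U, Fexp ε U ∂μ ≤ ∏ j ∈ Finset.range N, ENNReal.ofReal (1 + 300 / ((j : ℝ) + 1)) := by
  induction N with
  | zero =>
    intro μ _ _
    have : ∀ U : UG 0, Fexp ε U ≤ 1 := by
      intro U
      simp [Fexp, Set.piecewise, logSum, Matrix.charpoly]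
      split_ifs <;> simp
    calc _ ≤ ∫⁻ U : UG 0, 1 ∂μ := lintegral_mono this
      _ = 1 := by simp
      _ ≤ _ := by simp
  | succ N ih =>
    intro μ _ _
    obtain ⟨ν, hν1, hν2⟩ := exists_haar_prob N
    let i0 := eN N (Sum.inl ())
    have h1 : ∫⁻ U, Fexp ε U ∂μ = ∫⁻ V : UG N, ∫⁻ U, Fexp ε (iotaU V * U) ∂μ ∂ν := by
      simp_rw [lintegral_mul_left_eq_self]
      simp
    rw [h1, lintegral_lintegral_swap]
    · calc _ ≤ ∫⁻ U : UG (N + 1), ENNReal.ofReal (Real.exp (ε * (Complex.log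
              (1 - (U : Matrix (Fin (N + 1)) (Fin (N + 1)) ℂ) i0 i0)).im))
              * ∫⁻ V, Fexp ε V ∂ν ∂μ := by
            apply lintegral_mono_ae
            filter_upwards [ae_dOne_ne_zero μ] with U hU
            have ha : (U : Matrix (Fin (N + 1)) (Fin (N + 1)) ℂ) i0 i0 ≠ 1 := by
              intro ha
              apply hU
              refine Matrix.det_eq_zero_of_column_eq_zero i0 fun i => ?_
              by_cases hi : i = i0
              · subst hi; simp [ha]
              · have hs := sum_col_sq U i0
                rw [← Finset.add_sum_erase _ _ (Finset.mem_univ i0), ha] at hs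
                simp only [norm_one, one_pow, add_eq_left] at hs
                rw [Finset.sum_eq_zero_iff_of_nonneg (fun _ _ => by positivity)] at hs
                have := hs i (by simp [hi])
                simp only [ne_eq, OfNat.ofNat_ne_zero, not_false_eq_true, pow_eq_zero_iff,
                  norm_eq_zero] at this
                simp [this, hi]
            obtain ⟨W, hW⟩ := logSum_step U ha
            rw [← lintegral_mul_left_eq_self (μ := ν) (Fexp ε) W,
              ← lintegral_const_mul' _ _ ENNReal.ofReal_ne_top]
            apply lintegral_mono
            intro V
            obtain ⟨hd, hl⟩ := hW V
            by_cases h0 : dOne (W * V) = 0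
            · have : dOne (iotaU V * U) = 0 := by rw [hd, h0, mul_zero]
              simp [Fexp, Set.piecewise, this]
            · have h2 : dOne (iotaU V * U) ≠ 0 := by
                rw [hd]; exact mul_ne_zero (sub_ne_zero.2 (Ne.symm ha)) h0
              have h3 := hl h0
              simp only [Fexp, Set.piecewise, Set.mem_ofPred_eq, h0, h2, ne_eq, not_false_eq_true,
                if_true]
              rw [h3, ← ENNReal.ofReal_mul (Real.exp_pos _).le, ← Real.exp_add, Complex.add_im,
                mul_add]
        _ = (∫⁻ U : UG (N + 1), ENNReal.ofReal (Real.exp (ε * (Complex.log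
              (1 - (U : Matrix (Fin (N + 1)) (Fin (N + 1)) ℂ) i0 i0)).im)) ∂μ)
              * ∫⁻ V, Fexp ε V ∂ν := by
            rw [lintegral_mul_const]
            have := (continuous_entry i0 i0).measurable
            exact ENNReal.measurable_ofReal.comp (Real.measurable_exp.comp
              ((Complex.measurable_im.comp
                (Complex.measurable_log.comp (measurable_const.sub this))).const_mul ε))
        _ ≤ ENNReal.ofReal (1 + 300 / ((N + 1 : ℕ) : ℝ)) *
            ∏ j ∈ Finset.range N, ENNReal.ofReal (1 + 300 / ((j : ℝ) + 1)) := by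
            gcongr
            · exact integral_exp_arg_le μ i0 ε hε
            · exact ih ν
        _ = _ := by
            rw [Finset.prod_range_succ, mul_comm]
            push_cast
            rfl
    · apply Measurable.aemeasurable
      apply (measurable_Fexp ε).comp
      exact (((continuous_iotaU N).comp continuous_fst).mul continuous_snd).measurable

theorem prod_le_rpow (N : ℕ) :
    ∏ j ∈ Finset.range N, ENNReal.ofReal (1 + 300 / ((j : ℝ) + 1))
      ≤ ENNReal.ofReal (Real.exp (300 * (1 + Real.log N))) := by
  rw [← ENNReal.ofReal_prod_of_nonneg (fun j _ => by positivity)]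
  apply ENNReal.ofReal_le_ofReal
  calc _ ≤ ∏ j ∈ Finset.range N, Real.exp (300 / ((j : ℝ) + 1)) := by
        apply Finset.prod_le_prod (fun j _ => by positivity)
        intro j _
        rw [add_comm]
        exact Real.add_one_le_exp _
    _ = Real.exp (300 * (harmonic N : ℝ)) := by
        rw [← Real.exp_sum, harmonic]
        push_cast
        rw [Finset.mul_sum]
        simp [div_eq_mul_inv]
    _ ≤ _ := by
        apply Real.exp_le_exp.2
        have := harmonic_le_one_add_log N
        linarith


/-- The shifted argument in `[0, 2π)`. -/
noncomputable def angOf (z : ℂ) : ℝ :=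
  if 0 ≤ Complex.arg z then Complex.arg z else Complex.arg z + 2 * π

theorem angOf_nonneg (z : ℂ) : 0 ≤ angOf z := by
  unfold angOf
  split_ifs with h
  · exact h
  · linarith [Complex.neg_pi_lt_arg z, Real.pi_pos]

theorem angOf_lt (z : ℂ) : angOf z < 2 * π := by
  unfold angOf
  split_ifs with h
  · linarith [Complex.arg_le_pi z, Real.pi_pos]
  · linarith

theorem exp_angOf (z : ℂ) (hz : ‖z‖ = 1) : Complex.exp (angOf z * Complex.I) = z := by
  have h := Complex.norm_mul_exp_arg_mul_I z
  rw [hz, Complex.ofReal_one, one_mul] at h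
  unfold angOf
  split_ifs
  · exact h
  · push_cast
    rw [add_mul, Complex.exp_add, h, Complex.exp_two_pi_mul_I, mul_one]

theorem arg_one_sub_exp (ψ : ℝ) (h0 : 0 < ψ) (h1 : ψ < 2 * π) :
    Complex.arg (1 - Complex.exp (ψ * Complex.I)) = (ψ - π) / 2 := by
  have hs : 0 < Real.sin (ψ / 2) := Real.sin_pos_of_pos_of_lt_pi (by linarith) (by linarith)
  have h2 : 1 - Complex.exp (ψ * Complex.I)
      = ((2 * Real.sin (ψ / 2) : ℝ) : ℂ) * (Complex.cos (((ψ - π) / 2 : ℝ) : ℂ)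
        + Complex.sin (((ψ - π) / 2 : ℝ) : ℂ) * Complex.I) := by
    have e1 : Real.cos ((ψ - π) / 2) = Real.sin (ψ / 2) := by
      rw [sub_div, Real.cos_sub_pi_div_two]
    have e2 : Real.sin ((ψ - π) / 2) = - Real.cos (ψ / 2) := by
      rw [sub_div, Real.sin_sub_pi_div_two]
    have e3 : Real.cos ψ = 1 - 2 * Real.sin (ψ / 2) ^ 2 := by
      have := Real.cos_two_mul (ψ / 2)
      rw [mul_div_cancel₀ _ (two_ne_zero)] at this
      rw [this, Real.cos_sq']; ring
    have e4 : Real.sin ψ = 2 * Real.sin (ψ / 2) * Real.cos (ψ / 2) := by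
      have := Real.sin_two_mul (ψ / 2)
      rwa [mul_div_cancel₀ _ (two_ne_zero)] at this
    rw [Complex.exp_mul_I, ← Complex.ofReal_cos, ← Complex.ofReal_sin, ← Complex.ofReal_cos,
      ← Complex.ofReal_sin, e1, e2, e3, e4]
    push_cast
    ring
  rw [h2, Complex.arg_mul_cos_add_sin_mul_I (by linarith) ⟨by linarith, by linarith⟩]

theorem arg_bounds (z : ℂ) (hz : ‖z‖ = 1) (θ : ℝ) (h0 : 0 ≤ θ) (h1 : θ < 2 * π) :
    (angOf z - π) / 2 - θ / 2 + π * (if angOf z < θ then 1 else 0)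
      ≤ (Complex.log (1 - Complex.exp ((-θ : ℝ) * Complex.I) * z)).im ∧
    (Complex.log (1 - Complex.exp ((-θ : ℝ) * Complex.I) * z)).im
      ≤ (angOf z - π) / 2 - θ / 2 + π * (if angOf z ≤ θ then 1 else 0) := by
  have hpi := Real.pi_pos
  have hφ0 := angOf_nonneg z
  have hφ1 := angOf_lt z
  have hz' := exp_angOf z hz
  set φ := angOf z
  rw [Complex.log_im, ← hz', ← Complex.exp_add, ← add_mul]
  rcases lt_trichotomy φ θ with h | h | h
  · have h2 := arg_one_sub_exp (φ - θ + 2 * π) (by linarith) (by linarith)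
    have h3 : Complex.exp (((φ - θ + 2 * π : ℝ) : ℂ) * Complex.I)
        = Complex.exp ((((-θ : ℝ) : ℂ) + (φ : ℂ)) * Complex.I) := by
      push_cast
      rw [add_mul, Complex.exp_add, Complex.exp_two_pi_mul_I, mul_one]
      ring_nf
    rw [h3] at h2
    rw [h2, if_pos h, if_pos h.le]
    constructor <;> linarith
  · have h3 : (((-θ : ℝ) : ℂ) + (φ : ℂ)) = 0 := by rw [h]; push_cast; ring
    rw [h3, if_neg (by linarith), if_pos h.le]
    simp only [zero_mul, Complex.exp_zero, sub_self, Complex.arg_zero]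
    constructor <;> linarith
  · have h2 := arg_one_sub_exp (φ - θ) (by linarith) (by linarith)
    have h3 : Complex.exp (((φ - θ : ℝ) : ℂ) * Complex.I)
        = Complex.exp ((((-θ : ℝ) : ℂ) + (φ : ℂ)) * Complex.I) := by
      push_cast
      ring_nf
    rw [h3] at h2
    rw [h2, if_neg (by linarith), if_neg (by linarith)]
    constructor <;> linarith

open scoped Matrix.Norms.L2Operator in
theorem norm_root_unitary {N : ℕ} (U : UG N) (z : ℂ)
    (hz : z ∈ (U : Matrix (Fin N) (Fin N) ℂ).charpoly.roots) : ‖z‖ = 1 := by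
  have hz' := Matrix.mem_spectrum_of_isRoot_charpoly (Polynomial.isRoot_of_mem_roots hz)
  have := Unitary.spectrum_subset_circle (𝕜 := ℂ) U hz'
  simpa using this

/-- The rotated sum of arguments. -/
noncomputable def Trot {N : ℕ} (U : UG N) (θ : ℝ) : ℝ :=
  (logSum ((rot N (-θ) * U : UG N) : Matrix (Fin N) (Fin N) ℂ)).im

/-- The centered sum of the angles. -/
noncomputable def Asum {N : ℕ} (U : UG N) : ℝ :=
  ((U : Matrix (Fin N) (Fin N) ℂ).charpoly.roots.map fun z => (angOf z - π) / 2).sum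

theorem multiset_sum_im (s : Multiset ℂ) (f : ℂ → ℂ) :
    ((s.map f).sum).im = (s.map fun z => (f z).im).sum := by
  induction s using Multiset.induction_on with
  | empty => simp
  | cons a s ih => simp [ih]

theorem Trot_eq {N : ℕ} (U : UG N) (θ : ℝ) :
    Trot U θ = ((U : Matrix (Fin N) (Fin N) ℂ).charpoly.roots.map fun z =>
      (Complex.log (1 - Complex.exp ((-θ : ℝ) * Complex.I) * z)).im).sum := by
  rw [Trot, logSum, rot_mul_coe, roots_charpoly_smul, Multiset.map_map, multiset_sum_im]
  rfl

theorem card_filter_angOf (θ : ℝ) (q : ℝ → Prop) [DecidablePred q]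
    (hq : ∀ x, q x ↔ x ∈ Set.Icc 0 θ) (s : Multiset ℂ) :
    ((Multiset.card (Multiset.filter q (s.map angOf)) : ℕ) : ℝ)
      = (s.map fun z => if angOf z ≤ θ then (1 : ℝ) else 0).sum := by
  induction s using Multiset.induction_on with
  | empty => simp
  | cons a s ih =>
    have h0 := angOf_nonneg a
    rw [Multiset.map_cons, Multiset.map_cons, Multiset.sum_cons, ← ih]
    by_cases h : angOf a ≤ θ
    · rw [Multiset.filter_cons_of_pos _ ((hq (angOf a)).2 ⟨h0, h⟩), if_pos h]
      simp [add_comm]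
    · rw [Multiset.filter_cons_of_neg _ (fun h' => h ((hq (angOf a)).1 h').2), if_neg h]
      simp

theorem countFun_eq {N : ℕ} (U : UG N) (θ : ℝ) :
    (countFun N U θ : ℝ) = ((U : Matrix (Fin N) (Fin N) ℂ).charpoly.roots.map fun z =>
      if angOf z ≤ θ then (1 : ℝ) else 0).sum :=
  @card_filter_angOf θ (· ∈ Set.Icc 0 θ) (fun _ => Classical.propDecidable _) (fun _ => Iff.rfl) _

theorem sum_affine (s : Multiset ℂ) (f g : ℂ → ℝ) (c d : ℝ) :
    (s.map fun z => f z - c + d * g z).sum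
      = (s.map f).sum - Multiset.card s * c + d * (s.map g).sum := by
  induction s using Multiset.induction_on with
  | empty => simp
  | cons a s ih =>
    simp only [Multiset.map_cons, Multiset.sum_cons, ih, Multiset.card_cons]
    push_cast
    ring

theorem Trot_le {N : ℕ} (U : UG N) (θ : ℝ) (h0 : 0 ≤ θ) (h1 : θ < 2 * π) :
    Trot U θ ≤ Asum U - N * (θ / 2) + π * countFun N U θ := by
  have h := sum_affine (U : Matrix (Fin N) (Fin N) ℂ).charpoly.roots
    (fun z => (angOf z - π) / 2) (fun z => if angOf z ≤ θ then (1 : ℝ) else 0) (θ / 2) π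
  rw [card_roots_charpoly, Fintype.card_fin, ← countFun_eq] at h
  rw [Asum, ← h, Trot_eq]
  exact Multiset.sum_map_le_sum_map _ _ fun z hz =>
    (arg_bounds z (norm_root_unitary U z hz) θ h0 h1).2

theorem le_Trot {N : ℕ} (U : UG N) (θ θ' : ℝ) (h0 : 0 ≤ θ) (h1 : θ < 2 * π) (hθ : θ' < θ) :
    Asum U - N * (θ / 2) + π * countFun N U θ' ≤ Trot U θ := by
  have h := sum_affine (U : Matrix (Fin N) (Fin N) ℂ).charpoly.roots
    (fun z => (angOf z - π) / 2) (fun z => if angOf z ≤ θ' then (1 : ℝ) else 0) (θ / 2) π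
  rw [card_roots_charpoly, Fintype.card_fin, ← countFun_eq] at h
  rw [Asum, ← h, Trot_eq]
  refine Multiset.sum_map_le_sum_map _ _ fun z hz => le_trans ?_
    (arg_bounds z (norm_root_unitary U z hz) θ h0 h1).1
  have hpi := Real.pi_pos
  gcongr
  split_ifs <;> linarith

theorem countFun_le {N : ℕ} (U : UG N) (θ : ℝ) : (countFun N U θ : ℝ) ≤ N := by
  unfold countFun countAngles eigenAngles
  have := card_roots_charpoly (U : Matrix (Fin N) (Fin N) ℂ)
  rw [Fintype.card_fin] at this
  calc _ ≤ ((Multiset.card ((U : Matrix (Fin N) (Fin N) ℂ).charpoly.roots) : ℕ) : ℝ) := by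
        exact_mod_cast (Multiset.card_le_card (Multiset.filter_le _ _)).trans_eq
          (Multiset.card_map _ _)
    _ = N := by rw [this]

theorem countFun_mono {N : ℕ} (U : UG N) {θ θ' : ℝ} (h : θ ≤ θ') :
    (countFun N U θ : ℝ) ≤ countFun N U θ' := by
  rw [countFun_eq, countFun_eq]
  refine Multiset.sum_map_le_sum_map _ _ fun z _ => ?_
  split_ifs <;> linarith

theorem disc_bound {N : ℕ} (hN : 2 ≤ N) (U : UG N) (K : ℝ)
    (hK : ∀ k < N, |Trot U (2 * π * k / N)| ≤ K) (θ : ℝ) (h0 : 0 ≤ θ) (h1 : θ < 2 * π) :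
    |(countFun N U θ : ℝ) - N * θ / (2 * π)| ≤ K + 2 := by
  have hpi := Real.pi_gt_three
  have hNpos : (0 : ℝ) < N := by positivity
  have hN1 : (1 : ℝ) ≤ N := by exact_mod_cast (by omega : 1 ≤ N)
  have hgrid : ∀ k < N, (0 : ℝ) ≤ 2 * π * k / N ∧ 2 * π * k / N < 2 * π := by
    intro k hk
    refine ⟨by positivity, ?_⟩
    rw [div_lt_iff₀ hNpos]
    have : (k : ℝ) < N := by exact_mod_cast hk
    nlinarith
  have hNg : ∀ k : ℕ, (N : ℝ) * (2 * π * k / N / 2) = π * k := by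
    intro k; field_simp
  -- bounds on `Asum`
  have hA1 : Asum U ≤ K := by
    have h := le_Trot U 0 (-1) le_rfl (by linarith) (by norm_num)
    have h2 := hK 0 (by omega)
    simp only [Nat.cast_zero, mul_zero, zero_div] at h2
    have h3 : 0 ≤ π * (countFun N U (-1) : ℝ) := by positivity
    simp only [zero_div, mul_zero] at h
    linarith [(abs_le.1 h2).2]
  have hA2 : -K - π ≤ Asum U := by
    have hlt : N - 1 < N := by omega
    have h := Trot_le U _ (hgrid _ hlt).1 (hgrid _ hlt).2
    have h2 := (abs_le.1 (hK _ hlt)).1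
    rw [hNg] at h
    have h3 := countFun_le U (2 * π * (N - 1 : ℕ) / N)
    have h4 : ((N - 1 : ℕ) : ℝ) = N - 1 := by
      rw [Nat.cast_sub (by omega)]; simp
    have h5 := mul_le_mul_of_nonneg_left h3 Real.pi_pos.le
    have h6 : π * ((N - 1 : ℕ) : ℝ) = π * N - π := by rw [h4]; ring
    linarith
  have hK0 : 0 ≤ K := (abs_nonneg _).trans (hK 0 (by omega))
  -- the grid point
  set x : ℝ := N * θ / (2 * π) with hx
  have hx0 : 0 ≤ x := by positivity
  have hxN : x < N := by
    rw [hx, div_lt_iff₀ (by positivity)]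
    nlinarith
  have hθx : θ = 2 * π * x / N := by rw [hx]; field_simp
  let k := ⌊x⌋₊
  have hk1 : (k : ℝ) ≤ x := Nat.floor_le hx0
  have hk2 : x < k + 1 := Nat.lt_floor_add_one x
  have hkN : k < N := by exact_mod_cast (lt_of_le_of_lt hk1 hxN)
  have hlow : x - (K + 2) ≤ countFun N U θ := by
    have h := Trot_le U _ (hgrid k hkN).1 (hgrid k hkN).2
    rw [hNg] at h
    have h2 := (abs_le.1 (hK k hkN)).1
    have h3 : (countFun N U (2 * π * k / N) : ℝ) ≤ countFun N U θ := by
      apply countFun_mono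
      rw [hθx]
      gcongr
    have h4 : π * (k - (countFun N U θ : ℝ)) ≤ 2 * K := by nlinarith
    nlinarith
  have hup : (countFun N U θ : ℝ) ≤ x + (K + 2) := by
    by_cases hk : k + 1 < N
    · have h := le_Trot U _ θ (hgrid (k + 1) hk).1 (hgrid (k + 1) hk).2 (by
        rw [hθx]
        push_cast
        gcongr)
      rw [hNg] at h
      have h2 := (abs_le.1 (hK (k + 1) hk)).2
      push_cast at h h2
      have h4 : π * ((countFun N U θ : ℝ) - (k + 1)) ≤ 2 * K + π := by nlinarith
      nlinarith
    · have h5 : (N : ℝ) ≤ k + 1 := by exact_mod_cast (not_lt.1 hk)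
      linarith [countFun_le U θ]
  rw [abs_le]
  constructor <;> linarith

theorem dK_bound {N : ℕ} (hN : 2 ≤ N) (U : UG N) (K : ℝ)
    (hK : ∀ k < N, |Trot U (2 * π * k / N)| ≤ K) : N * dK N U ≤ K + 2 := by
  have hNpos : (0 : ℝ) < N := by positivity
  have hpi := Real.pi_pos
  rw [mul_comm, ← le_div_iff₀ hNpos]
  have : Nonempty (Set.Ico (0:ℝ) (2 * π)) := ⟨⟨0, le_rfl, by positivity⟩⟩
  apply ciSup_le
  rintro ⟨θ, h0, h1⟩
  have h := disc_bound hN U K hK θ h0 h1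
  rw [le_div_iff₀ hNpos, ← abs_of_pos hNpos, ← abs_mul, abs_of_pos hNpos]
  refine le_trans (le_of_eq ?_) h
  congr 1
  field_simp


/-- The exponential bound functional on the grid. -/
noncomputable def Zt {N : ℕ} (U : UG N) : ENNReal :=
  ∑ k ∈ Finset.range N, (Fexp 1 (rot N (-(2 * π * k / N)) * U)
    + Fexp (-1) (rot N (-(2 * π * k / N)) * U))

theorem measurable_Zt {N : ℕ} : Measurable (Zt (N := N)) := by
  unfold Zt
  refine Finset.measurable_sum _ fun k _ => ?_
  have hm : Measurable fun U : UG N => rot N (-(2 * π * k / N)) * U :=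
    (continuous_const.mul continuous_id).measurable
  exact ((measurable_Fexp 1).comp hm).add ((measurable_Fexp (-1)).comp hm)

theorem half_le_log {N : ℕ} (hN : 2 ≤ N) : (1 : ℝ) / 2 ≤ Real.log N := by
  have h2 : Real.log 2 ≤ Real.log N := Real.log_le_log (by norm_num) (by exact_mod_cast hN)
  linarith [Real.log_two_gt_d9]

theorem lintegral_Zt_le {N : ℕ} (hN : 2 ≤ N) (μ : Measure (UG N)) [IsProbabilityMeasure μ]
    [μ.IsMulLeftInvariant] :
    ∫⁻ U, Zt U ∂μ ≤ ENNReal.ofReal (Real.exp (902 * Real.log N)) := by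
  have hL := half_le_log hN
  have hNpos : (0 : ℝ) < N := by positivity
  have h2 : Real.log 2 ≤ Real.log N := Real.log_le_log (by norm_num) (by exact_mod_cast hN)
  have hm : ∀ k : ℕ, Measurable fun U : UG N => rot N (-(2 * π * k / N)) * U := fun k =>
    (continuous_const.mul continuous_id).measurable
  have hF : ∀ ε : ℝ, ε = 1 ∨ ε = -1 → ∫⁻ U : UG N, Fexp ε U ∂μ
      ≤ ENNReal.ofReal (Real.exp (300 * (1 + Real.log N))) := fun ε hε =>
    (lintegral_Fexp_le ε hε N μ).trans (prod_le_rpow N)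
  unfold Zt
  have hmm : ∀ k ∈ Finset.range N, Measurable fun U : UG N =>
      Fexp 1 (rot N (-(2 * π * k / N)) * U) + Fexp (-1) (rot N (-(2 * π * k / N)) * U) :=
    fun k _ => ((measurable_Fexp 1).comp (hm k)).add ((measurable_Fexp (-1)).comp (hm k))
  rw [lintegral_finsetSum _ hmm]
  calc _ ≤ ∑ k ∈ Finset.range N, (ENNReal.ofReal (Real.exp (300 * (1 + Real.log N)))
          + ENNReal.ofReal (Real.exp (300 * (1 + Real.log N)))) := by
        refine Finset.sum_le_sum fun k _ => ?_
        have hm1 : Measurable fun U : UG N => Fexp 1 (rot N (-(2 * π * k / N)) * U) :=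
          (measurable_Fexp 1).comp (hm k)
        rw [lintegral_add_left hm1,
          lintegral_mul_left_eq_self (μ := μ) (Fexp 1), lintegral_mul_left_eq_self (μ := μ) (Fexp (-1))]
        exact add_le_add (hF 1 (Or.inl rfl)) (hF (-1) (Or.inr rfl))
    _ = ENNReal.ofReal (N * (2 * Real.exp (300 * (1 + Real.log N)))) := by
        rw [Finset.sum_const, Finset.card_range, nsmul_eq_mul,
          ← ENNReal.ofReal_add (by positivity) (by positivity), ← two_mul,
          ENNReal.ofReal_mul hNpos.le, ENNReal.ofReal_natCast]
    _ ≤ _ := by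
        apply ENNReal.ofReal_le_ofReal
        calc (N : ℝ) * (2 * Real.exp (300 * (1 + Real.log N)))
            = Real.exp (Real.log N + (Real.log 2 + 300 * (1 + Real.log N))) := by
              rw [Real.exp_add, Real.exp_add, Real.exp_log hNpos, Real.exp_log (by norm_num)]
          _ ≤ _ := by
              apply Real.exp_le_exp.2
              linarith

theorem ae_Zt {N : ℕ} (μ : Measure (UG N)) [IsProbabilityMeasure μ]
    [μ.IsMulLeftInvariant] : ∀ᵐ U ∂μ, ∀ k < N,
      dOne (rot N (-(2 * π * k / N)) * U) ≠ 0 := by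
  rw [ae_all_iff]
  intro k
  have h := (measurePreserving_mul_left μ
    (rot N (-(2 * π * k / N)))).quasiMeasurePreserving.ae (ae_dOne_ne_zero μ)
  filter_upwards [h] with U hU _
  exact hU

theorem Zt_spec {N : ℕ} (hN : 2 ≤ N) (U : UG N)
    (hU : ∀ k < N, dOne (rot N (-(2 * π * k / N)) * U) ≠ 0) :
    1 ≤ (Zt U).toReal ∧ N * dK N U ≤ Real.log (Zt U).toReal + 2 := by
  have hF : ∀ ε : ℝ, ∀ k < N, Fexp ε (rot N (-(2 * π * k / N)) * U)
      = ENNReal.ofReal (Real.exp (ε * Trot U (2 * π * k / N))) := by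
    intro ε k hk
    unfold Fexp
    rw [Set.piecewise_eq_of_mem]
    · rfl
    · exact hU k hk
  have hZ : (Zt U).toReal = ∑ k ∈ Finset.range N, (Real.exp (Trot U (2 * π * k / N))
      + Real.exp (-Trot U (2 * π * k / N))) := by
    have : Zt U = ∑ k ∈ Finset.range N, ENNReal.ofReal (Real.exp (Trot U (2 * π * k / N))
      + Real.exp (-Trot U (2 * π * k / N))) := by
      unfold Zt
      refine Finset.sum_congr rfl fun k hk => ?_
      have hk' := Finset.mem_range.1 hk
      rw [hF 1 k hk', hF (-1) k hk', ENNReal.ofReal_add (by positivity) (by positivity)]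
      simp
    rw [this, ← ENNReal.ofReal_sum_of_nonneg (fun k _ => by positivity),
      ENNReal.toReal_ofReal (Finset.sum_nonneg fun k _ => by positivity)]
  have hle : ∀ k < N, Real.exp |Trot U (2 * π * k / N)| ≤ (Zt U).toReal := by
    intro k hk
    rw [hZ]
    refine le_trans ?_ (Finset.single_le_sum (f := fun k : ℕ => Real.exp (Trot U (2 * π * k / N))
      + Real.exp (-Trot U (2 * π * k / N))) (fun k _ => by positivity) (Finset.mem_range.2 hk))
    have h1 := Real.exp_pos (Trot U (2 * π * k / N))
    have h2 := Real.exp_pos (-Trot U (2 * π * k / N))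
    rcases abs_cases (Trot U (2 * π * k / N)) with h | h <;> rw [h.1] <;> linarith
  have h1 : 1 ≤ (Zt U).toReal :=
    (Real.one_le_exp (abs_nonneg _)).trans (hle 0 (by omega))
  refine ⟨h1, dK_bound hN U _ fun k hk => ?_⟩
  rw [Real.le_log_iff_exp_le (by linarith)]
  exact hle k hk

theorem dK_nonneg {N : ℕ} (U : UG N) : 0 ≤ dK N U := Real.iSup_nonneg fun _ => abs_nonneg _

theorem pointwise_bound (q L Z y : ℝ) (hq : 0 < q) (hL : 1 / 2 ≤ L) (hZ : 1 ≤ Z)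
    (hy0 : 0 ≤ y) (hy : L * y ≤ Real.log Z + 2) :
    y ^ q ≤ (1808 : ℝ) ^ q + ((⌈q⌉₊).factorial * 4 ^ ⌈q⌉₊ * Real.exp 1)
      * (Z * Real.exp (-(902 * L))) := by
  have hLpos : 0 < L := by linarith
  by_cases h : y ≤ 1808
  · have h1 : y ^ q ≤ (1808 : ℝ) ^ q := Real.rpow_le_rpow hy0 h hq.le
    have h2 : 0 ≤ ((⌈q⌉₊).factorial * 4 ^ ⌈q⌉₊ * Real.exp 1) * (Z * Real.exp (-(902 * L))) := by
      positivity
    linarith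
  · push Not at h
    set n := ⌈q⌉₊ with hn
    have h1 : y ^ q ≤ y ^ n := by
      rw [← Real.rpow_natCast]
      exact Real.rpow_le_rpow_of_exponent_le (by linarith) (Nat.le_ceil q)
    have h2 : y ^ n ≤ n.factorial * 4 ^ n * Real.exp (y / 4) := by
      have := Real.pow_div_factorial_le_exp (y / 4) (by linarith) n
      rw [div_le_iff₀ (by positivity), div_pow, div_le_iff₀ (by positivity)] at this
      linarith
    have h3 : Real.exp (y / 4) ≤ Real.exp 1 * (Z * Real.exp (-(902 * L))) := by
      have hZe := Real.exp_log (show 0 < Z by linarith)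
      conv_rhs => rw [← hZe]
      rw [← Real.exp_add, ← Real.exp_add]
      apply Real.exp_le_exp.2
      nlinarith
    have h4 : (0 : ℝ) ≤ (1808 : ℝ) ^ q := by positivity
    calc y ^ q ≤ n.factorial * 4 ^ n * Real.exp (y / 4) := h1.trans h2
      _ ≤ n.factorial * 4 ^ n * (Real.exp 1 * (Z * Real.exp (-(902 * L)))) := by gcongr
      _ ≤ _ := by rw [← mul_assoc (_ * _)]; linarith

theorem final_bound (q : ℝ) (hq : 0 < q) (N : ℕ) (hN : 2 ≤ N) (μ : Measure (UG N))
    [IsProbabilityMeasure μ] [μ.IsMulLeftInvariant] :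
    ∫ U, (((N : ℝ) / Real.log N) * dK N U) ^ q ∂μ
      ≤ (1808 : ℝ) ^ q + (⌈q⌉₊).factorial * 4 ^ ⌈q⌉₊ * Real.exp 1 := by
  have hL := half_le_log hN
  set L := Real.log N with hLdef
  set B : ℝ := (⌈q⌉₊).factorial * 4 ^ ⌈q⌉₊ * Real.exp 1 with hB
  have hB0 : 0 ≤ B := by positivity
  have hLpos : 0 < L := by linarith
  have hI := lintegral_Zt_le hN μ
  have hfin : ∫⁻ U, Zt U ∂μ ≠ ⊤ := ne_top_of_le_ne_top ENNReal.ofReal_ne_top hI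
  have hZint : Integrable (fun U => (Zt U).toReal) μ :=
    integrable_toReal_of_lintegral_ne_top measurable_Zt.aemeasurable hfin
  have hval : ∫ U, (Zt U).toReal ∂μ ≤ Real.exp (902 * L) := by
    rw [integral_toReal measurable_Zt.aemeasurable (ae_lt_top measurable_Zt hfin)]
    exact ENNReal.toReal_le_of_le_ofReal (by positivity) hI
  have hint2 : Integrable (fun U => (1808 : ℝ) ^ q + B * ((Zt U).toReal * Real.exp (-(902 * L)))) μ :=
    (integrable_const _).add ((hZint.mul_const _).const_mul _)
  calc _ ≤ ∫ U, ((1808 : ℝ) ^ q + B * ((Zt U).toReal * Real.exp (-(902 * L)))) ∂μ := by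
        refine integral_mono_of_nonneg (Eventually.of_forall fun U => ?_) hint2 ?_
        · have := dK_nonneg U
          simp only [Pi.zero_apply]
          positivity
        · filter_upwards [ae_Zt μ] with U hU
          obtain ⟨h1, h2⟩ := Zt_spec hN U hU
          refine pointwise_bound q L _ _ hq hL h1 (mul_nonneg (by positivity) (dK_nonneg U)) ?_
          rw [← mul_assoc, mul_div_cancel₀ _ hLpos.ne']
          exact h2
    _ = (1808 : ℝ) ^ q + B * ((∫ U, (Zt U).toReal ∂μ) * Real.exp (-(902 * L))) := by
        rw [integral_add (integrable_const _) ((hZint.mul_const _).const_mul _),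
          integral_const_mul, integral_mul_const]
        simp
    _ ≤ (1808 : ℝ) ^ q + B * (Real.exp (902 * L) * Real.exp (-(902 * L))) := by gcongr
    _ = _ := by rw [← Real.exp_add]; simp


end KolmHelpers

/-- For every `p > 0` there is `C'_p > 0` such that for every `N ≥ 2` and Haar-distributed `U`,
`𝔼[((N/log N) d_K(μ_N, ν))^{2p}] ≤ C'_p`; i.e. `(N/log N) d_K(μ_N, ν)` is bounded in `L_{2p}`. -/
theorem normalized_kolmogorov_bounded_in_Lp :
    ∀ p : ℝ, 0 < p → ∃ C : ℝ, 0 < C ∧ ∀ N : ℕ, 2 ≤ N →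
      ∀ ℙ : Measure (Matrix.unitaryGroup (Fin N) ℂ),
        IsProbabilityMeasure ℙ → ℙ.IsHaarMeasure →
          ∫ U, (((N : ℝ) / Real.log N) * dK N U) ^ (2 * p) ∂ℙ ≤ C := by
  intro p hp
  refine ⟨(1808 : ℝ) ^ (2 * p) + (⌈2 * p⌉₊).factorial * 4 ^ ⌈2 * p⌉₊ * Real.exp 1,
    by positivity, ?_⟩
  intro N hN ℙ h1 h2
  exact final_bound (2 * p) (by linarith) N hN ℙ
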